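/- Let L be a smooth operator field on ℝ³ such that at every point x the matrix L(x) has a single real eigenvalue of geometric multiplicity one (i.e. there exists λ ∈ ℝ with (L(x) − λ·I)³ = 0 and rank(L(x) − λ·I) = 2). Then the following are equivalent: (i) near every point p ∈ ℝ³, L is locally reducible to upper triangular form; (ii) the Haantjes torsion H_L = T^{(2)}_L vanishes identically, i.e. H_L(ξ, η)(x) = 0 for all smooth vector fields ξ, η and all x. -/

import Mathlib

/-!
Let `N` be the trace-free part of `L`. Under the hypothesis on the Jordan form it is nilpotent with
`N³ = 0` and `N² ≠ 0` at every point, and `L = λ + N` with `λ` smooth. The Haantjes torsion is a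
pointwise expression in `L` and its derivative and does not change when a scalar field is added to
`L` (`haantjes_eq_nilPart`), so `L` may be replaced by `N`. Using the derivative of `N³ = 0`, one
finds `H(v, Nv) = -3 N²[N²v, Nv]` for constant `v`, while the torsion vanishes on the other pairs
from `v, Nv, N²v` (`haanAt_self_map`, `haanAt_eq_zero`). As `N²v, Nv` span the kernel of `N²`,
vanishing of the Haantjes torsion says that the plane field `ker N² = im N` is involutive.

If `L` is upper triangular in coordinates `(x, y, z)`, then the third row of `N` vanishes there,
i.e. `dz ∘ N = 0`; so `ker N² = ker dz` is integrable and the torsion vanishes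
(`haantjes_of_reducible`, `form_torsion_eq_zero`).

Conversely, let the torsion vanish. The Frobenius theorem (`exists_frobenius_chart`) gives
coordinates in which `e₁ = N²v` is the first coordinate field and `ker N²` is spanned by the first
two; since `N²v` is an eigenvector of `L` and `ker N²` is `L`-invariant, `L` is upper triangular
there (`reducible_of_haantjes`). The chart is `G(c) = Φ₁^{c₀} (Φ₂^{c₁} (p + c₂ v))`, with `Φ₁, Φ₂`
the flows of `N²v` and `Nv`: on `c₀ = 0` one has `∂₁G = Nv`, so the form `ω`, a component of `N²`,
kills `∂₁G` there, and by involutivity `ω(∂₁G)` satisfies a linear homogeneous differential equation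
in `c₀`, hence vanishes identically.

Smoothness of the flow (`exists_localFlow`) comes from the inverse function theorem in the Banach
space `C([0,1], E)`, applied to the integral equation `w(s) = t ∫₀ˢ f (x + w)` for the displacement
`w` along the integral curve; smoothness of the equation rests on that of the composition operator
`u ↦ f ∘ u` (`contDiff_superpos`).
-/

open Matrix

/-- A vector field on ℝⁿ. -/
abbrev Vec (n : ℕ) := Fin n → ℝ
abbrev VF (n : ℕ) := Vec n → Vec n
abbrev OpField (n : ℕ) := Vec n → Matrix (Fin n) (Fin n) ℝ

/-- Smooth (C^∞) vector field. -/
def SmoothVF {n : ℕ} (ξ : VF n) : Prop := ContDiff ℝ (⊤ : ℕ∞) ξ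

/-- Smooth (C^∞) operator field, entrywise. -/
def SmoothOp {n : ℕ} (L : OpField n) : Prop :=
  ∀ i j : Fin n, ContDiff ℝ (⊤ : ℕ∞) fun x => L x i j

/-- Lie bracket of vector fields. -/
noncomputable def lieB {n : ℕ} (ξ η : VF n) : VF n :=
  fun x => fderiv ℝ η x (ξ x) - fderiv ℝ ξ x (η x)

/-- Pointwise action of an operator field on a vector field. -/
def app {n : ℕ} (L : OpField n) (ξ : VF n) : VF n := fun x => (L x).mulVec (ξ x)

/-- Nijenhuis torsion. -/
noncomputable def nijTor {n : ℕ} (L : OpField n) (ξ η : VF n) : VF n :=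
  app L (app L (lieB ξ η)) + lieB (app L ξ) (app L η)
    - app L (lieB (app L ξ) η) - app L (lieB ξ (app L η))

/-- Generalized Haantjes torsion: `genTor L m` is the torsion of level `m + 1`,
so `genTor L 0` is the Nijenhuis torsion `T^{(1)}_L` and `genTor L (m-1) = T^{(m)}_L`. -/
noncomputable def genTor {n : ℕ} (L : OpField n) : ℕ → VF n → VF n → VF n
  | 0 => nijTor L
  | m + 1 => fun ξ η =>
      app L (app L (genTor L m ξ η)) + genTor L m (app L ξ) (app L η)
        - app L (genTor L m (app L ξ) η) - app L (genTor L m ξ (app L η))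

/-- The Haantjes torsion `H_L = T^{(2)}_L`. -/
noncomputable def haantjes {n : ℕ} (L : OpField n) : VF n → VF n → VF n := genTor L 1

/-- Frölicher–Nijenhuis bracket of two operator fields. -/
noncomputable def fnB {n : ℕ} (K L : OpField n) (ξ η : VF n) : VF n :=
  lieB (app K ξ) (app L η) + lieB (app L ξ) (app K η)
    - app L (lieB (app K ξ) η) - app L (lieB ξ (app K η))
    - app K (lieB (app L ξ) η) - app K (lieB ξ (app L η))
    + app L (app K (lieB ξ η)) + app K (app L (lieB ξ η))

/-- Generalized Haantjes bracket: `genB K L m` is the bracket of level `m + 1`,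
so `genB K L 0 = [[K,L]]` and `genB K L (m-1) = H^{(m)}_{K,L}`. -/
noncomputable def genB {n : ℕ} (K L : OpField n) : ℕ → VF n → VF n → VF n
  | 0 => fnB K L
  | m + 1 => fun ξ η =>
      app K (app L (genB K L m ξ η)) + genB K L m (app K ξ) (app L η)
        - app L (genB K L m (app K ξ) η) - app K (genB K L m ξ (app L η))
        + app L (app K (genB K L m ξ η)) + genB K L m (app L ξ) (app K η)
        - app K (genB K L m (app L ξ) η) - app L (genB K L m ξ (app K η))

/-- Upper triangular matrix. -/
def UpperTri {n : ℕ} (A : Matrix (Fin n) (Fin n) ℝ) : Prop :=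
  ∀ i j : Fin n, j < i → A i j = 0

/-- Strictly upper triangular matrix. -/
def StrictUpperTri {n : ℕ} (A : Matrix (Fin n) (Fin n) ℝ) : Prop :=
  ∀ i j : Fin n, j ≤ i → A i j = 0

/-- Jacobian matrix of a map `f : ℝⁿ → ℝⁿ` at a point. -/
noncomputable def jacobianMatrix {n : ℕ} (f : VF n) (x : Vec n) :
    Matrix (Fin n) (Fin n) ℝ :=
  Matrix.of fun i j => fderiv ℝ f x (Pi.single j 1) i

/-- `L` is locally reducible, near `p`, to a form whose matrix satisfies `P`
(e.g. upper triangularity) in suitable local coordinates: there are an open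
neighbourhood `U` of `p` and a smooth diffeomorphism `φ` from `U` onto an open
set, with smooth inverse `ψ`, such that the pushforward operator field
`y ↦ Dφ(φ⁻¹ y) · L(φ⁻¹ y) · (Dφ(φ⁻¹ y))⁻¹ = Dφ(ψ y) · L(ψ y) · Dψ(y)`
satisfies `P` at every point of `φ '' U`. -/
def LocallyReducible {n : ℕ} (L : OpField n) (p : Vec n)
    (P : Matrix (Fin n) (Fin n) ℝ → Prop) : Prop :=
  ∃ U : Set (Vec n), IsOpen U ∧ p ∈ U ∧
    ∃ φ ψ : VF n,
      ContDiffOn ℝ (⊤ : ℕ∞) φ U ∧ IsOpen (φ '' U) ∧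
      ContDiffOn ℝ (⊤ : ℕ∞) ψ (φ '' U) ∧
      (∀ x ∈ U, ψ (φ x) = x) ∧ (∀ y ∈ φ '' U, φ (ψ y) = y) ∧
      ∀ y ∈ φ '' U, P (jacobianMatrix φ (ψ y) * L (ψ y) * jacobianMatrix ψ y)

/-! ### Smoothness of composition operators on spaces of continuous functions -/

section Flow

open scoped Topology unitInterval

/-- The superposition operator `u ↦ f ∘ u` on continuous functions on a space `K`. -/
def superpos (K : Type) [TopologicalSpace K] {E F : Type} [TopologicalSpace E] [TopologicalSpace F]
    (f : C(E, F)) (u : C(K, E)) : C(K, F) := f.comp u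

section Superposition

variable {K : Type} [TopologicalSpace K] [CompactSpace K] {E F : Type} [NormedAddCommGroup E]
  [NormedSpace ℝ E] [NormedAddCommGroup F] [NormedSpace ℝ F]

variable (K E F) in
/-- Pointwise evaluation of operator-valued functions, as a bounded bilinear map. -/
noncomputable def pointwiseApply : C(K, E →L[ℝ] F) →L[ℝ] C(K, E) →L[ℝ] C(K, F) :=
  LinearMap.mkContinuous₂
    (LinearMap.mk₂ ℝ (fun (A : C(K, E →L[ℝ] F)) (u : C(K, E)) =>
      (⟨fun k => A k (u k), A.continuous.clm_apply u.continuous⟩ :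
      C(K, F)))
      (by intros; ext; simp) (by intros; ext; simp) (by intros; ext; simp) (by intros; ext; simp)) 1
    (by
      intro A u
      rw [ContinuousMap.norm_le _ (by positivity)]
      intro k
      simp only [LinearMap.mk₂_apply, ContinuousMap.coe_mk, one_mul]
      exact ((A k).le_opNorm _).trans
        (mul_le_mul (A.norm_coe_le_norm k) (u.norm_coe_le_norm k) (norm_nonneg _) (norm_nonneg A)))

@[simp] lemma pointwiseApply_apply (A : C(K, E →L[ℝ] F)) (u : C(K, E)) (k : K) :
    pointwiseApply K E F A u k = A k (u k) := rfl

lemma hasFDerivAt_superpos (f : C(E, F)) (f' : C(E, E →L[ℝ] F))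
    (hf : ∀ x, HasFDerivAt f (f' x) x) (u : C(K, E)) :
    HasFDerivAt (superpos K f) (pointwiseApply K E F (superpos K f' u)) u := by
  rw [hasFDerivAt_iff_isLittleO_nhds_zero, Asymptotics.isLittleO_iff]
  intro ε hε
  have hc : Continuous (superpos K f') := ContinuousMap.continuous_postcomp f'
  obtain ⟨δ, hδ, H⟩ := (Metric.continuous_iff (f := superpos K f')).mp hc u ε hε
  filter_upwards [Metric.ball_mem_nhds (0 : C(K, E)) hδ] with h hh
  rw [mem_ball_zero_iff] at hh
  rw [ContinuousMap.norm_le _ (by positivity)]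
  intro k
  have key : ∀ y ∈ segment ℝ (u k) (u k + h k), ‖f' y - f' (u k)‖ ≤ ε := by
    intro y hy
    rw [segment_eq_image'] at hy
    obtain ⟨s, ⟨hs0, hs1⟩, rfl⟩ := hy
    have h1 : dist (u + s • h) u < δ := by
      rw [dist_eq_norm, add_sub_cancel_left, norm_smul, Real.norm_of_nonneg hs0]
      exact lt_of_le_of_lt (mul_le_of_le_one_left (norm_nonneg _) hs1) hh
    have h2 := (ContinuousMap.dist_apply_le_dist k).trans (H _ h1).le
    simpa [superpos, dist_eq_norm] using h2
  have mv := (convex_segment (u k) (u k + h k)).norm_image_sub_le_of_norm_hasFDerivWithin_le'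
    (fun y _ => (hf y).hasFDerivWithinAt) key (left_mem_segment ℝ _ _) (right_mem_segment ℝ _ _)
  simp only [add_sub_cancel_left] at mv
  refine le_trans (le_of_eq ?_) (mv.trans (mul_le_mul_of_nonneg_left (h.norm_coe_le_norm k) hε.le))
  simp [superpos]

end Superposition

lemma contDiff_superpos_nat {K : Type} [TopologicalSpace K] [CompactSpace K] {E : Type}
    [NormedAddCommGroup E] [NormedSpace ℝ E] (n : ℕ) :
    ∀ {F : Type} [NormedAddCommGroup F] [NormedSpace ℝ F] (f : C(E, F)), ContDiff ℝ n f →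
      ContDiff ℝ n (superpos K f) := by
  induction n with
  | zero =>
    intro F _ _ f _
    exact contDiff_zero.mpr (ContinuousMap.continuous_postcomp f)
  | succ n ih =>
    intro F _ _ f hf
    have hd : ContDiff ℝ n (fderiv ℝ f) := hf.fderiv_right le_rfl
    let f' : C(E, E →L[ℝ] F) := ⟨fderiv ℝ f, hd.continuous⟩
    have hf' : ∀ x, HasFDerivAt f (f' x) x := fun x =>
      ((hf.differentiable (by simp)) x).hasFDerivAt
    refine contDiff_succ_iff_hasFDerivAt.mpr ⟨fun u => pointwiseApply K E F (superpos K f' u), ?_,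
      fun u => hasFDerivAt_superpos f f' hf' u⟩
    exact (pointwiseApply K E F).contDiff.comp (ih f' hd)

lemma contDiff_superpos {K : Type} [TopologicalSpace K] [CompactSpace K] {E F : Type}
    [NormedAddCommGroup E] [NormedSpace ℝ E] [NormedAddCommGroup F] [NormedSpace ℝ F]
    (f : C(E, F)) (hf : ContDiff ℝ (⊤ : ℕ∞) f) : ContDiff ℝ (⊤ : ℕ∞) (superpos K f) :=
  contDiff_infty.mpr fun n => contDiff_superpos_nat n f (contDiff_infty.mp hf n)

/-! ### The inverse function theorem in the smooth category -/

/-- Inverse function theorem, with smoothness of the map and of its inverse throughout the domain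
and the target (`ContDiffAt ℝ ∞` at one point would not give a common neighbourhood for all
orders). -/
lemma exists_smooth_localInverse {X Y : Type} [NormedAddCommGroup X] [NormedSpace ℝ X]
    [CompleteSpace X] [NormedAddCommGroup Y] [NormedSpace ℝ Y] [CompleteSpace Y] {f : X → Y} {a : X}
    {S : Set X} (hSo : S ∈ 𝓝 a) (hS : ∀ x ∈ S, ContDiffAt ℝ (⊤ : ℕ∞) f x) (e : X ≃L[ℝ] Y)
    (he : HasFDerivAt f (e : X →L[ℝ] Y) a) :
    ∃ g : OpenPartialHomeomorph X Y, (∀ x, g x = f x) ∧ a ∈ g.source ∧ g.source ⊆ S ∧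
      ∀ y ∈ g.target, ContDiffAt ℝ (⊤ : ℕ∞) g.symm y := by
  have ha := hS a (mem_of_mem_nhds hSo)
  have hn : ((⊤ : ℕ∞) : WithTop ℕ∞) ≠ 0 := by simp
  set g₀ := ha.toOpenPartialHomeomorph f he hn with hg₀
  have hc : ContinuousAt (fderiv ℝ f) a :=
    (ha.fderiv_right (m := 0) (by simp)).continuousAt
  have hinv : ∀ᶠ x in 𝓝 a, fderiv ℝ f x ∈ Set.range ((↑) : (X ≃L[ℝ] Y) → (X →L[ℝ] Y)) := by
    refine hc.eventually_mem ?_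
    rw [he.fderiv]
    exact ContinuousLinearEquiv.nhds e
  obtain ⟨T, hT, hTo, haT⟩ := eventually_nhds_iff.mp (hinv.and hSo)
  refine ⟨g₀.restrOpen T hTo, fun x => ?_, ?_, ?_, ?_⟩
  · simp [hg₀]
  · exact ⟨ha.mem_toOpenPartialHomeomorph_source he hn, haT⟩
  · intro x hx
    exact (hT x hx.2).2
  · intro y hy
    have hx := (g₀.restrOpen T hTo).map_target hy
    obtain ⟨⟨e', he'⟩, hxS⟩ := hT _ hx.2
    have hcd := hS _ hxS
    refine (g₀.restrOpen T hTo).contDiffAt_symm (f₀' := e') hy ?_ ?_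
    · rw [he']
      exact (hcd.differentiableAt hn).hasFDerivAt
    · exact hcd

/-! ### Smooth local flows -/

section LocalFlow

variable {E : Type} [NormedAddCommGroup E] [NormedSpace ℝ E] [CompleteSpace E]

/-- A continuous curve on `[0, 1]`, extended to `ℝ` by constants. -/
noncomputable def curveExt (u : C(I, E)) : ℝ → E := Set.IccExtend zero_le_one u

omit [NormedSpace ℝ E] [CompleteSpace E] in
lemma continuous_curveExt (u : C(I, E)) : Continuous (curveExt u) := u.continuous.Icc_extend'

variable (E) in
/-- The primitive vanishing at `0`, as a bounded operator on continuous curves on `[0, 1]`. -/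
noncomputable def primitive : C(I, E) →L[ℝ] C(I, E) :=
  LinearMap.mkContinuous
    { toFun := fun u => ⟨fun s => ∫ r in (0 : ℝ)..s, curveExt u r, by
        have := intervalIntegral.continuous_primitive
          (fun a b => (continuous_curveExt u).intervalIntegrable (μ := MeasureTheory.volume) a b) 0
        exact this.comp continuous_subtype_val⟩
      map_add' := by
        intro u v
        ext s
        have := intervalIntegral.integral_add (μ := MeasureTheory.volume)
          ((continuous_curveExt u).intervalIntegrable 0 s)
          ((continuous_curveExt v).intervalIntegrable 0 s)
        simp only [ContinuousMap.coe_mk, ContinuousMap.add_apply]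
        rw [← this]; rfl
      map_smul' := by
        intro c u
        ext s
        have := intervalIntegral.integral_smul (μ := MeasureTheory.volume) (a := 0) (b := s) c
          (curveExt u)
        simp only [ContinuousMap.coe_mk, ContinuousMap.smul_apply, RingHom.id_apply]
        rw [← this]; rfl } 1
    (by
      intro u
      rw [ContinuousMap.norm_le _ (by positivity)]
      intro s
      have h := intervalIntegral.norm_integral_le_of_norm_le_const (a := 0) (b := (s : ℝ))
        (f := curveExt u) (C := ‖u‖) (fun x _ => u.norm_coe_le_norm _)
      refine h.trans ?_
      have hs := s.2
      rw [sub_zero, abs_of_nonneg hs.1, one_mul]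
      exact mul_le_of_le_one_right (norm_nonneg _) hs.2)

omit [CompleteSpace E] in
lemma primitive_apply (u : C(I, E)) (s : I) : primitive E u s = ∫ r in (0 : ℝ)..s, curveExt u r :=
  rfl

/-- The map `(x, t, w) ↦ (x, t, w - t ∫ f (x + w))`: its fibre over `(x, t, 0)` consists of the
displacements `w` of integral curves of `t f` issued from `x` and defined for unit time. -/
noncomputable def flowEq (f : C(E, E)) (a : E × ℝ × C(I, E)) : E × ℝ × C(I, E) :=
  (a.1, a.2.1, a.2.2 - a.2.1 • primitive E
    (superpos I f (ContinuousLinearMap.const ℝ I a.1 + a.2.2)))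

omit [CompleteSpace E] in
lemma contDiff_flowEq (f : C(E, E)) (hf : ContDiff ℝ (⊤ : ℕ∞) f) :
    ContDiff ℝ (⊤ : ℕ∞) (flowEq f) := by
  have h1 : ContDiff ℝ (⊤ : ℕ∞) fun a : E × ℝ × C(I, E) =>
      primitive E (superpos I f (ContinuousLinearMap.const ℝ I a.1 + a.2.2)) :=
    (primitive E).contDiff.comp ((contDiff_superpos f hf).comp (by fun_prop))
  have h2 : ContDiff ℝ (⊤ : ℕ∞) fun a : E × ℝ × C(I, E) => a.2.1 := contDiff_fst.comp contDiff_snd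
  have h3 : ContDiff ℝ (⊤ : ℕ∞) fun a : E × ℝ × C(I, E) => a.2.2 := contDiff_snd.comp contDiff_snd
  exact contDiff_fst.prodMk (h2.prodMk (h3.sub (h2.smul h1)))

/-- The shear `(x, t, w) ↦ (x, t, w - t c)`. -/
noncomputable def shear (c : C(I, E)) : (E × ℝ × C(I, E)) ≃L[ℝ] (E × ℝ × C(I, E)) :=
  ContinuousLinearEquiv.equivOfInverse
    ((ContinuousLinearMap.fst ℝ E (ℝ × C(I, E))).prod
      (((ContinuousLinearMap.fst ℝ ℝ C(I, E)).comp (ContinuousLinearMap.snd ℝ E (ℝ × C(I, E)))).prod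
      ((ContinuousLinearMap.snd ℝ ℝ C(I, E)).comp (ContinuousLinearMap.snd ℝ E (ℝ × C(I, E))) -
      ((ContinuousLinearMap.fst ℝ ℝ C(I, E)).comp
        (ContinuousLinearMap.snd ℝ E (ℝ × C(I, E)))).smulRight c)))
    ((ContinuousLinearMap.fst ℝ E (ℝ × C(I, E))).prod
      (((ContinuousLinearMap.fst ℝ ℝ C(I, E)).comp (ContinuousLinearMap.snd ℝ E (ℝ × C(I, E)))).prod
      ((ContinuousLinearMap.snd ℝ ℝ C(I, E)).comp (ContinuousLinearMap.snd ℝ E (ℝ × C(I, E))) +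
      ((ContinuousLinearMap.fst ℝ ℝ C(I, E)).comp
        (ContinuousLinearMap.snd ℝ E (ℝ × C(I, E)))).smulRight c)))
    (by rintro ⟨x, t, w⟩; simp) (by rintro ⟨x, t, w⟩; simp)

omit [CompleteSpace E] in
lemma hasFDerivAt_flowEq (f : C(E, E)) (hf : ContDiff ℝ (⊤ : ℕ∞) f) (p : E) :
    HasFDerivAt (flowEq f) (shear (primitive E (superpos I f (ContinuousLinearMap.const ℝ I p))) :
      (E × ℝ × C(I, E)) →L[ℝ] (E × ℝ × C(I, E))) (p, 0, 0) := by
  have h1 : Differentiable ℝ fun a : E × ℝ × C(I, E) =>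
      primitive E (superpos I f (ContinuousLinearMap.const ℝ I a.1 + a.2.2)) :=
    (primitive E).differentiable.comp
      (((contDiff_superpos f hf).differentiable (by simp)).comp (by fun_prop))
  have d0 := (ContinuousLinearMap.fst ℝ E (ℝ × C(I, E))).hasFDerivAt (x := (p, 0, 0))
  have d2 := ((ContinuousLinearMap.fst ℝ ℝ C(I, E)).comp
    (ContinuousLinearMap.snd ℝ E (ℝ × C(I, E)))).hasFDerivAt (x := (p, 0, 0))
  have d3 := ((ContinuousLinearMap.snd ℝ ℝ C(I, E)).comp
    (ContinuousLinearMap.snd ℝ E (ℝ × C(I, E)))).hasFDerivAt (x := (p, 0, 0))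
  refine (d0.prodMk (d2.prodMk (d3.sub (d2.smul (h1 (p, 0, 0)).hasFDerivAt)))).congr_fderiv ?_
  apply ContinuousLinearMap.ext
  rintro ⟨x, t, w⟩
  simp [shear]

/-- Smooth vector fields have smooth local flows. -/
lemma exists_localFlow (f : C(E, E)) (hf : ContDiff ℝ (⊤ : ℕ∞) f) (p : E) :
    ∃ Φ : E × ℝ → E, ∃ δ > 0, ∀ x ∈ Metric.ball p δ, ∀ t ∈ Metric.ball (0 : ℝ) δ,
      ContDiffAt ℝ (⊤ : ℕ∞) Φ (x, t) ∧ Φ (x, 0) = x ∧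
        HasDerivAt (fun s => Φ (x, s)) (f (Φ (x, t))) t := by
  obtain ⟨g, hg, hgs, -, hgt⟩ := exists_smooth_localInverse (S := Set.univ) Filter.univ_mem
    (fun x _ => (contDiff_flowEq f hf).contDiffAt) _ (hasFDerivAt_flowEq f hf p)
  have hgp : g (p, 0, 0) = (p, 0, 0) := by simp [hg, flowEq]
  have hpt : ((p, 0, 0) : E × ℝ × C(I, E)) ∈ g.target := by
    have := g.map_source hgs
    rwa [hgp] at this
  have hsp : g.symm (p, 0, 0) = (p, 0, 0) := by
    have := g.left_inv hgs
    rwa [hgp] at this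
  obtain ⟨ρ, hρ, hρs⟩ := Metric.isOpen_iff.mp g.open_source _ hgs
  have hcont : g.symm ⁻¹' (Metric.ball (p, 0, 0) ρ) ∈ 𝓝 ((p, 0, 0) : E × ℝ × C(I, E)) := by
    apply (g.symm.continuousAt hpt).preimage_mem_nhds
    rw [hsp]
    exact Metric.ball_mem_nhds _ hρ
  obtain ⟨δ₀, hδ₀, hδ₀s⟩ := Metric.mem_nhds_iff.mp
    (Filter.inter_mem (g.open_target.mem_nhds hpt) hcont)
  obtain ⟨δ, hδ, hδρ, hδδ₀⟩ : ∃ δ > 0, δ ≤ ρ ∧ δ ≤ δ₀ :=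
    ⟨min ρ δ₀, lt_min hρ hδ₀, min_le_left _ _, min_le_right _ _⟩
  have hmem : ∀ x ∈ Metric.ball p δ, ∀ t ∈ Metric.ball (0 : ℝ) δ,
      ((x, t, 0) : E × ℝ × C(I, E)) ∈ g.target ∧
        g.symm (x, t, 0) ∈ Metric.ball ((p, 0, 0) : E × ℝ × C(I, E)) ρ := by
    intro x hx t ht
    apply hδ₀s
    rw [Metric.mem_ball, Prod.dist_eq, Prod.dist_eq]
    simp only [dist_self, max_lt_iff]
    exact ⟨lt_of_lt_of_le hx hδδ₀, lt_of_lt_of_le ht hδδ₀, hδ₀⟩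
  set w : E → ℝ → C(I, E) := fun x t => (g.symm (x, t, 0)).2.2 with hw
  have hwρ : ∀ x ∈ Metric.ball p δ, ∀ t ∈ Metric.ball (0 : ℝ) δ, ‖w x t‖ < ρ := by
    intro x hx t ht
    have := (hmem x hx t ht).2
    rw [Metric.mem_ball, Prod.dist_eq, Prod.dist_eq, max_lt_iff, max_lt_iff] at this
    simpa using this.2.2
  have hweq : ∀ x ∈ Metric.ball p δ, ∀ t ∈ Metric.ball (0 : ℝ) δ,
      w x t = t • primitive E (superpos I f (ContinuousLinearMap.const ℝ I x + w x t)) := by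
    intro x hx t ht
    have := g.right_inv (hmem x hx t ht).1
    rw [hg] at this
    simp only [flowEq, Prod.mk.injEq] at this
    obtain ⟨h1, h2, h3⟩ := this
    rw [h1, h2] at h3
    exact sub_eq_zero.mp h3
  have huniq : ∀ x ∈ Metric.ball p δ, ∀ t ∈ Metric.ball (0 : ℝ) δ, ∀ w' : C(I, E), ‖w'‖ < ρ →
      w' = t • primitive E (superpos I f (ContinuousLinearMap.const ℝ I x + w')) → w x t = w' := by
    intro x hx t ht w' hw' he
    have hs : ((x, t, w') : E × ℝ × C(I, E)) ∈ g.source := by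
      apply hρs
      rw [Metric.mem_ball, Prod.dist_eq, Prod.dist_eq, max_lt_iff, max_lt_iff]
      exact ⟨lt_of_lt_of_le hx hδρ, lt_of_lt_of_le ht hδρ, by simpa using hw'⟩
    have h1 := g.left_inv hs
    have h2 : g (x, t, w') = (x, t, 0) := by
      rw [hg]
      simp only [flowEq, Prod.mk.injEq, true_and]
      exact sub_eq_zero.mpr he
    rw [h2] at h1
    simp [hw, h1]
  have hwapp : ∀ x ∈ Metric.ball p δ, ∀ t ∈ Metric.ball (0 : ℝ) δ, ∀ s : I,
      w x t s = t • ∫ r in (0 : ℝ)..s, f (x + curveExt (w x t) r) := by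
    intro x hx t ht s
    conv_lhs => rw [hweq x hx t ht]
    rfl
  -- Rescaling time in an integral curve of `t f` gives the integral curve of `τ t f`.
  have hscale : ∀ x ∈ Metric.ball p δ, ∀ t ∈ Metric.ball (0 : ℝ) δ, ∀ τ s : I,
      w x (τ * t) s = w x t (τ * s) := by
    intro x hx t ht τ s
    have hτ := τ.2
    have ht' : (τ : ℝ) * t ∈ Metric.ball (0 : ℝ) δ := by
      rw [mem_ball_zero_iff] at ht ⊢
      rw [norm_mul, Real.norm_of_nonneg hτ.1]
      exact lt_of_le_of_lt (mul_le_of_le_one_left (norm_nonneg _) hτ.2) ht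
    let w' : C(I, E) := (w x t).comp ⟨fun s => τ * s, by fun_prop⟩
    have hw'n : ‖w'‖ < ρ := by
      refine lt_of_le_of_lt ?_ (hwρ x hx t ht)
      rw [ContinuousMap.norm_le _ (norm_nonneg _)]
      intro k
      exact (w x t).norm_coe_le_norm _
    have : w x (τ * t) = w' := by
      refine huniq x hx _ ht' w' hw'n ?_
      ext k
      have e1 : w' k = w x t (τ * k) := rfl
      rw [e1, hwapp x hx t ht]
      simp only [ContinuousMap.smul_apply, primitive_apply]
      rw [mul_comm (τ : ℝ) t, mul_smul]
      congr 1
      have e2 := intervalIntegral.smul_integral_comp_mul_left (a := 0) (b := (k : ℝ))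
        (fun r => f (x + curveExt (w x t) r)) τ
      rw [mul_zero] at e2
      rw [show ((τ * k : I) : ℝ) = (τ : ℝ) * k from rfl, ← e2]
      congr 1
      apply intervalIntegral.integral_congr
      intro r hr
      rw [Set.uIcc_of_le k.2.1] at hr
      have hrI : r ∈ Set.Icc (0 : ℝ) 1 := ⟨hr.1, hr.2.trans k.2.2⟩
      have hτr : (τ : ℝ) * r ∈ Set.Icc (0 : ℝ) 1 := (τ * ⟨r, hrI⟩ : I).2
      simp only [curveExt]
      rw [Set.IccExtend_of_mem _ _ hrI, Set.IccExtend_of_mem _ _ hτr]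
      rfl
    rw [this]
    rfl
  set Φ : E × ℝ → E := fun q => q.1 + w q.1 q.2 1 with hΦ
  have hΦd : ∀ x ∈ Metric.ball p δ, ∀ t ∈ Metric.ball (0 : ℝ) δ,
      ContDiffAt ℝ (⊤ : ℕ∞) Φ (x, t) := by
    intro x hx t ht
    have h1 := hgt _ (hmem x hx t ht).1
    have h2 : ContDiff ℝ (⊤ : ℕ∞) fun q : E × ℝ => ((q.1, q.2, 0) : E × ℝ × C(I, E)) :=
      contDiff_fst.prodMk (contDiff_snd.prodMk contDiff_const)
    have h3 : ContDiffAt ℝ (⊤ : ℕ∞) (fun q : E × ℝ => g.symm (q.1, q.2, 0)) (x, t) :=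
      ContDiffAt.comp (x, t) (g := g.symm) h1 h2.contDiffAt
    let ev : C(I, E) →L[ℝ] E := ContinuousMap.evalCLM ℝ (1 : I)
    exact contDiffAt_fst.add (ev.contDiff.contDiffAt.comp (x, t) h3.snd.snd)
  have hflow : ∀ x ∈ Metric.ball p δ, ∀ t ∈ Metric.ball (0 : ℝ) δ,
      Φ (x, t) = x + ∫ r in (0 : ℝ)..t, f (Φ (x, r)) := by
    intro x hx t ht
    have e1 := intervalIntegral.smul_integral_comp_mul_right (a := 0) (b := 1)
        (fun r => f (Φ (x, r))) t
    rw [zero_mul, one_mul] at e1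
    rw [← e1]
    simp only [hΦ, hwapp x hx t ht 1]
    congr 2
    apply intervalIntegral.integral_congr
    intro r hr
    rw [Set.Icc.coe_one, Set.uIcc_of_le zero_le_one] at hr
    have := hscale x hx t ht ⟨r, hr⟩ 1
    simp only [curveExt]
    rw [Set.IccExtend_of_mem _ _ hr, this, mul_one]
  refine ⟨Φ, δ, hδ, fun x hx t ht => ⟨hΦd x hx t ht, ?_, ?_⟩⟩
  · simpa using hflow x hx 0 (Metric.mem_ball_self hδ)
  · have hcts : ContinuousOn (fun r => f (Φ (x, r))) (Metric.ball 0 δ) := by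
      intro r hr
      refine ContinuousAt.continuousWithinAt ?_
      exact (f.continuous.continuousAt).comp
        ((hΦd x hx r hr).continuousAt.comp (by fun_prop : ContinuousAt (fun r => (x, r)) r))
    have hsub : Set.uIcc 0 t ⊆ Metric.ball (0 : ℝ) δ := by
      rw [← segment_eq_uIcc]
      exact (convex_ball _ _).segment_subset (Metric.mem_ball_self hδ) ht
    have hd := intervalIntegral.integral_hasDerivAt_right
      ((hcts.mono hsub).intervalIntegrable)
      (hcts.stronglyMeasurableAtFilter Metric.isOpen_ball t ht)
      (hcts.continuousAt (Metric.isOpen_ball.mem_nhds ht))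
    refine (hd.const_add x).congr_of_eventuallyEq ?_
    filter_upwards [Metric.isOpen_ball.mem_nhds ht] with s hs using hflow x hx s hs

end LocalFlow
end Flow

/-! ### The Haantjes torsion as a pointwise algebraic expression -/

section Algebra

variable {E : Type} [NormedAddCommGroup E] [NormedSpace ℝ E]

/-- The value at a point of the Nijenhuis torsion of an operator field whose value there is `A` and
whose derivative there is `B`, on arguments with values `v`, `w`. -/
noncomputable def nijAt (A : E →L[ℝ] E) (B : E →L[ℝ] E →L[ℝ] E) (v w : E) : E :=
  B (A v) w - B (A w) v + A (B w v) - A (B v w)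

/-- The value at a point of the Haantjes torsion of an operator field whose value there is `A` and
whose derivative there is `B`, on arguments with values `v`, `w`. -/
noncomputable def haanAt (A : E →L[ℝ] E) (B : E →L[ℝ] E →L[ℝ] E) (v w : E) : E :=
  A (A (nijAt A B v w)) + nijAt A B (A v) (A w) - A (nijAt A B (A v) w) - A (nijAt A B v (A w))

/-- The Haantjes torsion does not change when a scalar field, with value `c` and derivative `θ`,
is added to the operator field. -/
lemma haanAt_shift (A N : E →L[ℝ] E) (B C : E →L[ℝ] E →L[ℝ] E) (c : ℝ) (θ : E →L[ℝ] ℝ)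
    (hA : ∀ v, A v = c • v + N v) (hB : ∀ h v, B h v = θ h • v + C h v) (v w : E) :
    haanAt A B v w = haanAt N C v w := by
  simp only [haanAt, nijAt, hA, hB, map_add, map_sub, map_smul, _root_.add_apply,
    _root_.smul_apply, smul_add, smul_sub]
  module

lemma haanAt_add_left (A : E →L[ℝ] E) (B : E →L[ℝ] E →L[ℝ] E) (v v' w : E) :
    haanAt A B (v + v') w = haanAt A B v w + haanAt A B v' w := by
  simp only [haanAt, nijAt, map_add, map_sub, _root_.add_apply]
  module

lemma haanAt_smul_left (A : E →L[ℝ] E) (B : E →L[ℝ] E →L[ℝ] E) (c : ℝ) (v w : E) :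
    haanAt A B (c • v) w = c • haanAt A B v w := by
  simp only [haanAt, nijAt, map_add, map_sub, map_smul, _root_.smul_apply]
  module

lemma haanAt_swap (A : E →L[ℝ] E) (B : E →L[ℝ] E →L[ℝ] E) (v w : E) :
    haanAt A B v w = - haanAt A B w v := by
  simp only [haanAt, nijAt, map_add, map_sub]
  module

variable {N : E →L[ℝ] E} {C : E →L[ℝ] E →L[ℝ] E}

/-- For a field of nilpotent operators, `H(v, Nv) = -3 N²[N²v, Nv]`, where `v` is extended to a
constant vector field. -/
lemma haanAt_self_map (h3 : ∀ v, N (N (N v)) = 0)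
    (hC : ∀ h v, C h (N (N v)) + N (C h (N v)) + N (N (C h v)) = 0) (v : E) :
    haanAt N C v (N v) = (-3 : ℝ) • N (N (C (N (N v)) v - C (N v) (N v))) := by
  have a1 := hC (N (N v)) v
  have a2 := congrArg N (hC (N v) v)
  have a3 := congrArg N (congrArg N (hC v v))
  simp only [haanAt, nijAt, map_add, map_sub, h3, map_zero, _root_.zero_apply] at *
  linear_combination (norm := module) a1 - (2 : ℝ) • a2 + a3

lemma haanAt_self_map_map (h3 : ∀ v, N (N (N v)) = 0)
    (hC : ∀ h v, C h (N (N v)) + N (C h (N v)) + N (N (C h v)) = 0) (v : E) :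
    haanAt N C v (N (N v)) = 0 := by
  have a1 := congrArg N (hC (N (N v)) v)
  have a2 := congrArg N (congrArg N (hC (N v) v))
  simp only [haanAt, nijAt, map_add, map_sub, h3, map_zero, _root_.zero_apply] at *
  linear_combination (norm := module) -a1 + (2 : ℝ) • a2

lemma haanAt_map_map_map (h3 : ∀ v, N (N (N v)) = 0)
    (hC : ∀ h v, C h (N (N v)) + N (C h (N v)) + N (N (C h v)) = 0) (v : E) :
    haanAt N C (N v) (N (N v)) = 0 := by
  have a1 := congrArg N (congrArg N (hC (N (N v)) v))
  simp only [haanAt, nijAt, map_add, map_sub, h3, map_zero, _root_.zero_apply] at *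
  linear_combination (norm := module) a1

/-- The single identity `N²[N²v, Nv] = 0`, for one cyclic vector `v`, forces the whole Haantjes
torsion to vanish. -/
lemma haanAt_eq_zero (h3 : ∀ v, N (N (N v)) = 0)
    (hC : ∀ h v, C h (N (N v)) + N (C h (N v)) + N (N (C h v)) = 0) (v : E)
    (hv : ∀ w, ∃ a b c : ℝ, w = a • v + b • N v + c • N (N v))
    (hK : N (N (C (N (N v)) v - C (N v) (N v))) = 0) (w w' : E) : haanAt N C w w' = 0 := by
  have h01 : haanAt N C v (N v) = 0 := by rw [haanAt_self_map h3 hC, hK, smul_zero]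
  have h02 := haanAt_self_map_map h3 hC v
  have h12 := haanAt_map_map_map h3 hC v
  have hs : ∀ u : E, haanAt N C u u = 0 := fun u => by
    have h := haanAt_swap N C u u
    rw [eq_neg_iff_add_eq_zero, ← two_smul ℝ] at h
    simpa using h
  have key : ∀ u, haanAt N C v u = 0 → haanAt N C (N v) u = 0 → haanAt N C (N (N v)) u = 0 →
      ∀ w, haanAt N C w u = 0 := by
    intro u h0 h1 h2 w
    obtain ⟨a, b, c, rfl⟩ := hv w
    simp [haanAt_add_left, haanAt_smul_left, h0, h1, h2]
  have sw : ∀ u u', haanAt N C u u' = 0 → haanAt N C u' u = 0 := fun u u' h => by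
    rw [haanAt_swap, h, neg_zero]
  refine key _ ?_ ?_ ?_ w
  · exact sw _ _ (key _ (hs _) (sw _ _ h01) (sw _ _ h02) w')
  · exact sw _ _ (key _ h01 (hs _) (sw _ _ h12) w')
  · exact sw _ _ (key _ h02 h12 (hs _) w')

/-- Polarised form of the condition `N²[N²v, Nv] = 0`. -/
lemma torsion_polarised (h3 : ∀ v, N (N (N v)) = 0)
    (hC : ∀ h v, C h (N (N v)) + N (C h (N v)) + N (N (C h v)) = 0) (v : E)
    (hv : ∀ w, ∃ a b c : ℝ, w = a • v + b • N v + c • N (N v))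
    (hK : N (N (C (N (N v)) v - C (N v) (N v))) = 0) (a : E) :
    N (N (C (N (N v)) a)) = N (N (C (N a) (N v))) := by
  obtain ⟨a, b, c, rfl⟩ := hv a
  have a1 := hC (N (N v)) (N (N v))
  have hK' := sub_eq_zero.mp (by simpa only [map_sub] using hK)
  simp only [map_add, map_smul, h3, smul_zero, map_zero, _root_.add_apply,
    _root_.smul_apply, add_zero, zero_add] at *
  rw [hK', a1]; simp

end Algebra

/-! ### Translation to operator-valued maps -/

/-- The operator field `L`, as a map into continuous linear operators. -/
noncomputable def opCLM {n : ℕ} (L : OpField n) : Vec n → (Vec n →L[ℝ] Vec n) :=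
  fun x => LinearMap.toContinuousLinearMap (Matrix.mulVecLin (L x))

lemma opCLM_apply {n : ℕ} (L : OpField n) (x v : Vec n) : opCLM L x v = (L x).mulVec v := rfl

lemma contDiff_opCLM {n : ℕ} {L : OpField n} (hL : SmoothOp L) :
    ContDiff ℝ (⊤ : ℕ∞) (opCLM L) := by
  rw [contDiff_clm_apply_iff]
  intro v
  rw [contDiff_pi]
  intro i
  simp only [opCLM_apply, Matrix.mulVec, dotProduct]
  exact ContDiff.sum fun j _ => (hL i j).mul contDiff_const

lemma app_eq {n : ℕ} (L : OpField n) (ξ : VF n) : app L ξ = fun x => opCLM L x (ξ x) := rfl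

lemma smoothVF_app {n : ℕ} {L : OpField n} (hL : SmoothOp L) {ξ : VF n} (hξ : SmoothVF ξ) :
    SmoothVF (app L ξ) := (contDiff_opCLM hL).clm_apply hξ

lemma SmoothVF.differentiableAt {n : ℕ} {ξ : VF n} (hξ : SmoothVF ξ) (x : Vec n) :
    DifferentiableAt ℝ ξ x := (ContDiff.differentiable hξ (by simp)) x

lemma fderiv_app {n : ℕ} {L : OpField n} (hL : SmoothOp L) {ξ : VF n} (hξ : SmoothVF ξ)
    (x h : Vec n) :
    fderiv ℝ (app L ξ) x h = fderiv ℝ (opCLM L) x h (ξ x) + opCLM L x (fderiv ℝ ξ x h) := by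
  have := (((contDiff_opCLM hL).differentiable (by simp)) x).hasFDerivAt.clm_apply
    (hξ.differentiableAt x).hasFDerivAt
  rw [app_eq, this.fderiv]
  simp [add_comm]

lemma nijTor_eq {n : ℕ} {L : OpField n} (hL : SmoothOp L) {ξ η : VF n} (hξ : SmoothVF ξ)
    (hη : SmoothVF η) (x : Vec n) :
    nijTor L ξ η x = nijAt (opCLM L x) (fderiv ℝ (opCLM L) x) (ξ x) (η x) := by
  simp only [nijTor, Pi.sub_apply, Pi.add_apply]
  simp only [app_eq L (lieB ξ η), app_eq L (lieB (app L ξ) η),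
    app_eq L (lieB ξ (app L η)), lieB, fderiv_app hL hξ, fderiv_app hL hη, nijAt, map_sub, map_add]
  simp only [app_eq, map_sub]
  module

lemma haantjes_eq {n : ℕ} {L : OpField n} (hL : SmoothOp L) {ξ η : VF n} (hξ : SmoothVF ξ)
    (hη : SmoothVF η) (x : Vec n) :
    haantjes L ξ η x = haanAt (opCLM L x) (fderiv ℝ (opCLM L) x) (ξ x) (η x) := by
  have h := @nijTor_eq n L hL
  have e : haantjes L ξ η = app L (app L (nijTor L ξ η)) + nijTor L (app L ξ) (app L η)
        - app L (nijTor L (app L ξ) η) - app L (nijTor L ξ (app L η)) := rfl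
  rw [e]
  simp only [Pi.sub_apply, Pi.add_apply, h (smoothVF_app hL hξ) (smoothVF_app hL hη)]
  simp only [app_eq L (nijTor L ξ η),
    app_eq L (nijTor L (app L ξ) η), app_eq L (nijTor L ξ (app L η)), h hξ hη,
    h (smoothVF_app hL hξ) hη, h hξ (smoothVF_app hL hη)]
  simp only [app_eq, haanAt]

/-- The trace-free part of a `3 × 3` operator field. When `L` has a single eigenvalue this is its
nilpotent part. -/
noncomputable def nilPart (L : OpField 3) : OpField 3 :=
  fun x => L x - ((L x).trace / 3) • (1 : Matrix (Fin 3) (Fin 3) ℝ)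

lemma smoothOp_nilPart {L : OpField 3} (hL : SmoothOp L) : SmoothOp (nilPart L) := by
  intro i j
  simp only [nilPart, Matrix.sub_apply, Matrix.smul_apply, smul_eq_mul, Matrix.trace, Matrix.diag]
  exact (hL i j).sub (((ContDiff.sum fun k _ => hL k k).div_const _).mul contDiff_const)

lemma nilPart_eq {A : Matrix (Fin 3) (Fin 3) ℝ} {lam : ℝ}
    (h : (A - lam • (1 : Matrix (Fin 3) (Fin 3) ℝ)) ^ 3 = 0) : A.trace / 3 = lam := by
  have h1 : (A - lam • (1 : Matrix (Fin 3) (Fin 3) ℝ)).trace = 0 :=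
    (Matrix.isNilpotent_trace_of_isNilpotent ⟨3, h⟩).eq_zero
  simp only [Matrix.trace_sub, Matrix.trace_smul, Matrix.trace_one, Fintype.card_fin,
    smul_eq_mul] at h1
  push_cast at h1
  linarith

lemma haantjes_eq_nilPart {L : OpField 3} (hL : SmoothOp L) {ξ η : VF 3} (hξ : SmoothVF ξ)
    (hη : SmoothVF η) (x : Vec 3) :
    haantjes L ξ η x = haanAt (opCLM (nilPart L) x) (fderiv ℝ (opCLM (nilPart L)) x) (ξ x) (η x) := by
  rw [haantjes_eq hL hξ hη]
  set lam : Vec 3 → ℝ := fun x => (L x).trace / 3 with hlam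
  have hlamd : ContDiff ℝ (⊤ : ℕ∞) lam := by
    simp only [hlam, Matrix.trace, Matrix.diag]
    exact (ContDiff.sum fun k _ => hL k k).div_const _
  have e : ∀ x v, opCLM L x v = lam x • v + opCLM (nilPart L) x v := by
    intro x v
    simp only [opCLM_apply, nilPart, Matrix.sub_mulVec, Matrix.smul_mulVec, Matrix.one_mulVec, hlam]
    module
  have e2 : opCLM L = fun x => lam x • ContinuousLinearMap.id ℝ (Vec 3) + opCLM (nilPart L) x := by
    funext x; ext1 v; simp [e]
  refine haanAt_shift _ _ _ _ (lam x) (fderiv ℝ lam x) (e x) ?_ _ _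
  intro h v
  have d1 := ((hlamd.differentiable (by simp)) x).hasFDerivAt
  have d2 := (((contDiff_opCLM (smoothOp_nilPart hL)).differentiable (by simp)) x).hasFDerivAt
  have d3 := (d1.smul_const (ContinuousLinearMap.id ℝ (Vec 3))).add d2
  have d4 : fderiv ℝ (opCLM L) x h v = _ :=
    congrArg (fun T => T h v) ((congrArg (fun F => fderiv ℝ F x) e2).trans d3.fderiv)
  rw [d4]
  simp

/-- Derivative of the identity `N³ = 0`, applied to a vector `v`. -/
lemma fderiv_cube_eq_zero {E : Type} [NormedAddCommGroup E] [NormedSpace ℝ E]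
    {N : E → (E →L[ℝ] E)} {x : E} (hd : DifferentiableAt ℝ N x)
    (h3 : ∀ x v, N x (N x (N x v)) = 0) (h v : E) :
    fderiv ℝ N x h (N x (N x v)) + N x (fderiv ℝ N x h (N x v))
      + N x (N x (fderiv ℝ N x h v)) = 0 := by
  have d := hd.hasFDerivAt
  have d1 := d.clm_apply (d.clm_apply (d.clm_apply (hasFDerivAt_const v x)))
  have d2 : HasFDerivAt (fun y => N y (N y (N y v))) (0 : E →L[ℝ] E) x := by
    simp only [h3]; exact hasFDerivAt_const _ _
  have := DFunLike.congr_fun (d1.unique d2) h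
  simp at this
  rw [← this]; abel

/-! ### Regular nilpotent operators in dimension three -/

lemma opCLM_nilPart_cube {L : OpField 3}
    (hJordan : ∀ x : Vec 3, ∃ lam : ℝ,
      (L x - lam • (1 : Matrix (Fin 3) (Fin 3) ℝ)) ^ 3 = 0 ∧
      (L x - lam • (1 : Matrix (Fin 3) (Fin 3) ℝ)).rank = 2) (x v : Vec 3) :
    opCLM (nilPart L) x (opCLM (nilPart L) x (opCLM (nilPart L) x v)) = 0 := by
  obtain ⟨lam, h, -⟩ := hJordan x
  simp only [opCLM_apply, nilPart, nilPart_eq h, Matrix.mulVec_mulVec]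
  rw [← pow_two, ← pow_succ', h, Matrix.zero_mulVec]

lemma exists_nilPart_sq_ne_zero {L : OpField 3}
    (hJordan : ∀ x : Vec 3, ∃ lam : ℝ,
      (L x - lam • (1 : Matrix (Fin 3) (Fin 3) ℝ)) ^ 3 = 0 ∧
      (L x - lam • (1 : Matrix (Fin 3) (Fin 3) ℝ)).rank = 2) (x : Vec 3) :
    ∃ v, opCLM (nilPart L) x (opCLM (nilPart L) x v) ≠ 0 := by
  obtain ⟨lam, h, hr⟩ := hJordan x
  by_contra! h0
  simp only [opCLM_apply, nilPart, nilPart_eq h, Matrix.mulVec_mulVec] at h0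
  have h1 := Matrix.rank_add_rank_le_card_of_mul_eq_zero
    (Matrix.ext_of_mulVec_single fun i => (h0 (Pi.single i 1)).trans (Matrix.zero_mulVec _).symm)
  rw [hr, Fintype.card_fin] at h1
  omega

/-- Three linearly independent vectors span a space of dimension three. -/
lemma exists_combination {u v w : Vec 3} (h : LinearIndependent ℝ ![u, v, w]) (x : Vec 3) :
    ∃ a b c : ℝ, x = a • u + b • v + c • w := by
  have hs := h.span_eq_top_of_card_eq_finrank' (by simp)
  have hx : x ∈ Submodule.span ℝ (Set.range ![u, v, w]) := hs ▸ Submodule.mem_top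
  obtain ⟨c, hc⟩ := (Submodule.mem_span_range_iff_exists_fun ℝ).mp hx
  refine ⟨c 0, c 1, c 2, ?_⟩
  rw [← hc, Fin.sum_univ_three]
  simp

lemma linearIndependent_cyclic {N : Vec 3 →L[ℝ] Vec 3} (h3 : ∀ v, N (N (N v)) = 0) {v : Vec 3}
    (hv : N (N v) ≠ 0) : LinearIndependent ℝ ![v, N v, N (N v)] := by
  rw [Fintype.linearIndependent_iff]
  intro g hg
  simp only [Fin.sum_univ_three, Matrix.cons_val_zero, Matrix.cons_val_one, Matrix.cons_val] at hg
  have g0 : g 0 = 0 := by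
    have := congrArg (fun w => N (N w)) hg
    simpa [h3, hv] using this
  have g1 : g 1 = 0 := by
    have := congrArg N hg
    simpa [h3, hv, g0] using this
  have g2 : g 2 = 0 := by simpa [g0, g1, hv] using hg
  intro i; fin_cases i <;> assumption

lemma exists_cyclic_combination {N : Vec 3 →L[ℝ] Vec 3} (h3 : ∀ v, N (N (N v)) = 0) {v : Vec 3}
    (hv : N (N v) ≠ 0) (w : Vec 3) : ∃ a b c : ℝ, w = a • v + b • N v + c • N (N v) :=
  exists_combination (linearIndependent_cyclic h3 hv) w

/-- For a regular nilpotent `N`, a nonzero linear form vanishing on the image of `N` vanishes only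
on the kernel of `N²`, since both spaces are the same plane. -/
lemma sq_eq_zero_of_form_eq_zero {N : Vec 3 →L[ℝ] Vec 3} (h3 : ∀ v, N (N (N v)) = 0)
    (h2 : ∃ v, N (N v) ≠ 0) {α : Vec 3 →L[ℝ] ℝ} (hα : α ≠ 0) (hN : ∀ v, α (N v) = 0)
    {w : Vec 3} (hw : α w = 0) : N (N w) = 0 := by
  obtain ⟨v, hv⟩ := h2
  have hαv : α v ≠ 0 := by
    intro h
    apply hα
    ext1 u
    obtain ⟨a, b, c, rfl⟩ := exists_cyclic_combination h3 hv u
    simp [hN, h]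
  obtain ⟨a, b, c, rfl⟩ := exists_cyclic_combination h3 hv w
  have ha : a = 0 := by simpa [hN, hαv] using hw
  simp [ha, h3]

/-! ### Haantjes torsion and involutivity of the kernel of `N²` -/

lemma torsion_of_haantjes {L : OpField 3} (hL : SmoothOp L)
    (h3 : ∀ x v, opCLM (nilPart L) x (opCLM (nilPart L) x (opCLM (nilPart L) x v)) = 0)
    (hH : ∀ ξ η : VF 3, SmoothVF ξ → SmoothVF η → ∀ x : Vec 3, haantjes L ξ η x = 0)
    (x v : Vec 3) :
    opCLM (nilPart L) x (opCLM (nilPart L) x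
      (fderiv ℝ (opCLM (nilPart L)) x (opCLM (nilPart L) x (opCLM (nilPart L) x v)) v
        - fderiv ℝ (opCLM (nilPart L)) x (opCLM (nilPart L) x v) (opCLM (nilPart L) x v))) = 0 := by
  have hd := ((contDiff_opCLM (smoothOp_nilPart hL)).differentiable (by simp)) x
  have h := hH (fun _ => v) (fun _ => opCLM (nilPart L) x v) contDiff_const contDiff_const x
  rw [haantjes_eq_nilPart hL contDiff_const contDiff_const,
    haanAt_self_map (h3 x) (fderiv_cube_eq_zero hd h3)] at h
  simpa using h

lemma isSymmSndFDerivAt_of_smooth {E F : Type} [NormedAddCommGroup E] [NormedSpace ℝ E]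
    [NormedAddCommGroup F] [NormedSpace ℝ F] {f : E → F} {x : E}
    (hf : ContDiffAt ℝ (⊤ : ℕ∞) f x) : IsSymmSndFDerivAt ℝ f x := by
  refine hf.isSymmSndFDerivAt ?_
  rw [minSmoothness_of_isRCLikeNormedField]
  exact WithTop.coe_le_coe.mpr (le_top : (2 : ℕ∞) ≤ ⊤)

/-- If `dz ∘ N = 0` then `dz` annihilates `[N²v, Nv]`, where `v` is extended to a constant vector
field: the derivative of `dz(N v) = 0` and the symmetry of the Hessian of `z` give this. -/
lemma form_torsion_eq_zero {E : Type} [NormedAddCommGroup E] [NormedSpace ℝ E]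
    {N : E → (E →L[ℝ] E)} {x : E} (hd : DifferentiableAt ℝ N x) {z : E → ℝ}
    (hz : ContDiffAt ℝ (⊤ : ℕ∞) z x) (hN : ∀ᶠ y in nhds x, ∀ v, fderiv ℝ z y (N y v) = 0) (v : E) :
    fderiv ℝ z x (fderiv ℝ N x (N x (N x v)) v - fderiv ℝ N x (N x v) (N x v)) = 0 := by
  have hz2 : DifferentiableAt ℝ (fderiv ℝ z) x :=
    (hz.fderiv_right (m := 1) (by norm_cast)).differentiableAt (by simp)
  have key : ∀ h v, fderiv ℝ (fderiv ℝ z) x h (N x v) + fderiv ℝ z x (fderiv ℝ N x h v) = 0 := by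
    intro h v
    have d1 := hz2.hasFDerivAt.clm_apply (hd.hasFDerivAt.clm_apply (hasFDerivAt_const v x))
    have d2 : HasFDerivAt (fun y => fderiv ℝ z y (N y v)) (0 : E →L[ℝ] ℝ) x :=
      (hasFDerivAt_const (0 : ℝ) x).congr_of_eventuallyEq (hN.mono fun y hy => hy v)
    have := DFunLike.congr_fun (d1.unique d2) h
    simp at this
    rw [← this]; abel
  have hs := isSymmSndFDerivAt_of_smooth hz
  have k1 := key (N x (N x v)) v
  have k2 := key (N x v) (N x v)
  have k3 := hs.eq (N x (N x v)) (N x v)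
  rw [map_sub]
  linarith

/-- The third row of an upper triangular matrix `M` with `(M - λ)³ = 0`, shifted by `λ`,
vanishes. -/
lemma upperTri_last_row {M : Matrix (Fin 3) (Fin 3) ℝ} (hM : UpperTri M) {lam : ℝ}
    (h : (M - lam • (1 : Matrix (Fin 3) (Fin 3) ℝ)) ^ 3 = 0) (j : Fin 3) :
    (M - lam • (1 : Matrix (Fin 3) (Fin 3) ℝ)) 2 j = 0 := by
  have h20 : M 2 0 = 0 := hM 2 0 (by decide)
  have h21 : M 2 1 = 0 := hM 2 1 (by decide)
  have h22 := congrFun (congrFun h 2) 2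
  simp [pow_succ, Matrix.mul_apply, Fin.sum_univ_three, h20, h21] at h22
  fin_cases j <;> simp [h20, h21, h22]

lemma jacobianMatrix_mulVec {n : ℕ} (f : VF n) (x h : Vec n) :
    jacobianMatrix f x *ᵥ h = fderiv ℝ f x h := by
  have : jacobianMatrix f x = LinearMap.toMatrix' (fderiv ℝ f x : Vec n →ₗ[ℝ] Vec n) := by
    ext i j
    simp [jacobianMatrix, LinearMap.toMatrix'_apply]
  rw [this, LinearMap.toMatrix'_mulVec]
  rfl

lemma haantjes_of_reducible {L : OpField 3} (hL : SmoothOp L)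
    (hJordan : ∀ x : Vec 3, ∃ lam : ℝ,
      (L x - lam • (1 : Matrix (Fin 3) (Fin 3) ℝ)) ^ 3 = 0 ∧
      (L x - lam • (1 : Matrix (Fin 3) (Fin 3) ℝ)).rank = 2)
    {p : Vec 3} (hp : LocallyReducible L p UpperTri) {ξ η : VF 3} (hξ : SmoothVF ξ)
    (hη : SmoothVF η) : haantjes L ξ η p = 0 := by
  obtain ⟨U, hU, hpU, φ, ψ, hφ, hV, hψ, hψφ, hφψ, hT⟩ := hp
  have h3 := opCLM_nilPart_cube hJordan
  have hd := ((contDiff_opCLM (smoothOp_nilPart hL)).differentiable (by simp)) p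
  have hφx : ∀ x ∈ U, ContDiffAt ℝ (⊤ : ℕ∞) φ x := fun x hx => hφ.contDiffAt (hU.mem_nhds hx)
  have hφd : ∀ x ∈ U, DifferentiableAt ℝ φ x := fun x hx => (hφx x hx).differentiableAt (by simp)
  have hψd : ∀ x ∈ U, DifferentiableAt ℝ ψ (φ x) := fun x hx =>
    (hψ.contDiffAt (hV.mem_nhds ⟨x, hx, rfl⟩)).differentiableAt (by simp)
  have inv : ∀ x ∈ U, ∀ h, fderiv ℝ ψ (φ x) (fderiv ℝ φ x h) = h := by
    intro x hx h
    have d1 := (hψd x hx).hasFDerivAt.comp x (hφd x hx).hasFDerivAt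
    have d2 : HasFDerivAt (ψ ∘ φ) (ContinuousLinearMap.id ℝ (Vec 3)) x :=
      (hasFDerivAt_id x).congr_of_eventuallyEq (by
        filter_upwards [hU.mem_nhds hx] with y hy using hψφ y hy)
    exact DFunLike.congr_fun (d1.unique d2) h
  have hJ : ∀ x ∈ U, jacobianMatrix ψ (φ x) * jacobianMatrix φ x = 1 := by
    intro x hx
    refine Matrix.ext_of_mulVec_single fun i => ?_
    rw [← Matrix.mulVec_mulVec, jacobianMatrix_mulVec, jacobianMatrix_mulVec, inv x hx,
      Matrix.one_mulVec]
  set z : Vec 3 → ℝ := fun x => φ x 2 with hz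
  have hzf : ∀ x ∈ U, ∀ h, fderiv ℝ z x h = fderiv ℝ φ x h 2 := by
    intro x hx h
    rw [hz, fderiv_apply (hφd x hx) 2]; rfl
  have hzN : ∀ x ∈ U, ∀ v, fderiv ℝ z x (opCLM (nilPart L) x v) = 0 := by
    intro x hx v
    obtain ⟨lam, hl, -⟩ := hJordan x
    have ht := hT (φ x) ⟨x, hx, rfl⟩
    rw [hψφ x hx] at ht
    set A := jacobianMatrix φ x
    set B := jacobianMatrix ψ (φ x)
    have hBA : B * A = 1 := hJ x hx
    have hAB : A * B = 1 := mul_eq_one_comm.mp hBA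
    have hM : A * L x * B - lam • (1 : Matrix (Fin 3) (Fin 3) ℝ)
        = A * (L x - lam • (1 : Matrix (Fin 3) (Fin 3) ℝ)) * B := by
      rw [Matrix.mul_sub, Matrix.sub_mul, Matrix.mul_smul, Matrix.mul_one, Matrix.smul_mul, hAB]
    have hM3 : (A * L x * B - lam • (1 : Matrix (Fin 3) (Fin 3) ℝ)) ^ 3 = 0 := by
      rw [hM]
      generalize (L x - lam • (1 : Matrix (Fin 3) (Fin 3) ℝ)) = P at hl
      calc (A * P * B) ^ 3 = A * P * (B * A) * P * (B * A) * P * B := by noncomm_ring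
        _ = A * P ^ 3 * B := by rw [hBA]; noncomm_ring
        _ = 0 := by rw [hl]; simp
    have hrow := upperTri_last_row ht hM3
    rw [hzf x hx, ← jacobianMatrix_mulVec, opCLM_apply, nilPart, nilPart_eq hl]
    have : A *ᵥ ((L x - lam • (1 : Matrix (Fin 3) (Fin 3) ℝ)) *ᵥ v)
        = (A * L x * B - lam • (1 : Matrix (Fin 3) (Fin 3) ℝ)) *ᵥ (A *ᵥ v) := by
      rw [hM, Matrix.mulVec_mulVec, Matrix.mulVec_mulVec, Matrix.mul_assoc _ B, hBA,
        Matrix.mul_one]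
    change (A *ᵥ _) 2 = 0
    rw [this, Matrix.mulVec, dotProduct]
    exact Finset.sum_eq_zero fun j _ => by rw [hrow, zero_mul]
  have hz0 : fderiv ℝ z p ≠ 0 := by
    intro h0
    have hAB : jacobianMatrix φ p * jacobianMatrix ψ (φ p) = 1 := mul_eq_one_comm.mp (hJ p hpU)
    have h1 := hzf p hpU (jacobianMatrix ψ (φ p) *ᵥ Pi.single 2 1)
    rw [h0, ← jacobianMatrix_mulVec, Matrix.mulVec_mulVec, hAB] at h1
    simp at h1
  obtain ⟨v, hv⟩ := exists_nilPart_sq_ne_zero hJordan p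
  rw [haantjes_eq_nilPart hL hξ hη]
  refine haanAt_eq_zero (h3 p) (fderiv_cube_eq_zero hd h3) v
    (exists_cyclic_combination (h3 p) hv) ?_ _ _
  refine sq_eq_zero_of_form_eq_zero (h3 p) ⟨v, hv⟩ hz0 (hzN p hpU) ?_
  refine form_torsion_eq_zero hd ?_ ?_ v
  · exact contDiffAt_pi.mp (hφx p hpU) 2
  · filter_upwards [hU.mem_nhds hpU] with x hx using hzN x hx

/-! ### The Frobenius theorem for plane fields in dimension three -/

/-- A solution of a scalar linear homogeneous equation with bounded coefficient that vanishes once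
vanishes identically. -/
lemma eq_zero_of_linear_ode {g k : ℝ → ℝ} {K ε : ℝ} (hK : ∀ t ∈ Set.Ioo (-ε) ε, |k t| ≤ K)
    (hg : ∀ t ∈ Set.Ioo (-ε) ε, HasDerivAt g (k t * g t) t) (h0 : g 0 = 0) {t : ℝ}
    (ht : t ∈ Set.Ioo (-ε) ε) : g t = 0 := by
  have hε : (0 : ℝ) ∈ Set.Ioo (-ε) ε := by constructor <;> linarith [ht.1, ht.2]
  have hlip : ∀ t ∈ Set.Ioo (-ε) ε, LipschitzOnWith K.toNNReal (fun y => k t * y) Set.univ := by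
    intro t ht
    refine LipschitzWith.lipschitzOnWith (LipschitzWith.of_dist_le_mul fun x y => ?_)
    rw [Real.dist_eq, Real.dist_eq, ← mul_sub, abs_mul,
      Real.coe_toNNReal _ ((abs_nonneg _).trans (hK t ht))]
    exact mul_le_mul_of_nonneg_right (hK t ht) (abs_nonneg _)
  exact ODE_solution_unique_of_mem_Ioo (v := fun t y => k t * y) (f := g) (g := fun _ => 0)
    hlip hε (fun t ht => ⟨hg t ht, trivial⟩)
    (fun t _ => ⟨by simpa using hasDerivAt_const t (0 : ℝ), trivial⟩) h0 ht

/-- Restriction of the derivative to a coordinate direction. -/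
lemma fderiv_basisVector {n : ℕ} {F : Type} [NormedAddCommGroup F] [NormedSpace ℝ F] {G : Vec n → F}
    {c : Vec n} (hG : DifferentiableAt ℝ G c) (i : Fin n) {d : F}
    (hd : HasDerivAt (fun s => G (Function.update c i s)) d (c i)) :
    fderiv ℝ G c (Pi.single i 1) = d := by
  have h := hG.hasFDerivAt.comp_hasDerivAt_of_eq (c i) (hasDerivAt_update c i (c i))
    (Function.update_eq_self i c).symm
  exact h.unique hd

/-- If `∂₀G = e ∘ G` with `ω(e) = 0` and `dω(e, J) = 0` for all `J` in `ker ω`, then `g = ω(∂₁G)`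
satisfies the linear homogeneous equation `∂₀g = κ g` with `κ = dω(e, v) / ω(v)`. -/
lemma hasFDerivAt_form_apply {G : Vec 3 → Vec 3} {ω : Vec 3 → (Vec 3 →L[ℝ] ℝ)}
    {e : Vec 3 → Vec 3} {c v : Vec 3} (hG : ContDiffAt ℝ (⊤ : ℕ∞) G c)
    (hω : Differentiable ℝ ω) (he : Differentiable ℝ e) (hωe : ∀ x, ω x (e x) = 0)
    (hGe : ∀ᶠ c' in nhds c, fderiv ℝ G c' (Pi.single 0 1) = e (G c')) (hv : ω (G c) v ≠ 0)
    (H : ∀ J, ω (G c) J = 0 → fderiv ℝ ω (G c) (e (G c)) J = fderiv ℝ ω (G c) J (e (G c))) :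
    ∃ D : Vec 3 →L[ℝ] ℝ, HasFDerivAt (fun c' => ω (G c') (fderiv ℝ G c' (Pi.single 1 1))) D c ∧
      D (Pi.single 0 1) = ((fderiv ℝ ω (G c) (e (G c)) v - fderiv ℝ ω (G c) v (e (G c)))
        / ω (G c) v) * ω (G c) (fderiv ℝ G c (Pi.single 1 1)) := by
  have hG2 : DifferentiableAt ℝ (fderiv ℝ G) c :=
    (hG.fderiv_right (m := 1) (by norm_cast)).differentiableAt (by simp)
  have hGd : DifferentiableAt ℝ G c := hG.differentiableAt (by simp)
  have d1 := ((hω (G c)).hasFDerivAt.comp c hGd.hasFDerivAt).clm_apply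
    (hG2.hasFDerivAt.clm_apply (hasFDerivAt_const (Pi.single 1 1) c))
  refine ⟨_, d1, ?_⟩
  set J := fderiv ℝ G c (Pi.single 1 1) with hJ
  have hs := isSymmSndFDerivAt_of_smooth hG
  have s1 := hs.eq (Pi.single 0 1) (Pi.single 1 1)
  -- `∂₁∂₀G = De(J)`, by differentiating `∂₀G = e ∘ G`.
  have s2 : fderiv ℝ (fderiv ℝ G) c (Pi.single 1 1) (Pi.single 0 1) = fderiv ℝ e (G c) J := by
    have d2 := hG2.hasFDerivAt.clm_apply (hasFDerivAt_const (Pi.single 0 1) c)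
    have d3 := ((he (G c)).hasFDerivAt.comp c hGd.hasFDerivAt).congr_of_eventuallyEq hGe
    have := DFunLike.congr_fun (d2.unique d3) (Pi.single 1 1)
    simpa using this
  have s3 : fderiv ℝ ω (G c) J (e (G c)) + ω (G c) (fderiv ℝ e (G c) J) = 0 := by
    have d4 := (hω (G c)).hasFDerivAt.clm_apply (he (G c)).hasFDerivAt
    have d5 : HasFDerivAt (fun x => ω x (e x)) (0 : Vec 3 →L[ℝ] ℝ) (G c) := by
      simp only [hωe]; exact hasFDerivAt_const _ _
    have := DFunLike.congr_fun (d4.unique d5) J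
    simp at this
    linarith
  have s4 := H (J - (ω (G c) J / ω (G c) v) • v) (by simp [hv])
  simp at s4
  simp [s1, s2, hGe.self_of_nhds]
  linear_combination s3 + s4

/-- Frobenius theorem: a plane field `ker ω` spanned by `e₁` and `e₂` and involutive (hypothesis
`H`, which is `dω(e₁, J) = 0` for `J` in the plane field) has integral surfaces `c₂ = const` in
suitable coordinates `c`; moreover `e₁` is the first coordinate field. -/
lemma exists_frobenius_chart {ω : Vec 3 → (Vec 3 →L[ℝ] ℝ)} (hω : ContDiff ℝ (⊤ : ℕ∞) ω)
    {e₁ e₂ : Vec 3 → Vec 3} (he₁ : ContDiff ℝ (⊤ : ℕ∞) e₁) (he₂ : ContDiff ℝ (⊤ : ℕ∞) e₂)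
    (hω₁ : ∀ x, ω x (e₁ x) = 0) (hω₂ : ∀ x, ω x (e₂ x) = 0) {p v : Vec 3} (hv : ω p v ≠ 0)
    (hli : LinearIndependent ℝ ![e₁ p, e₂ p, v])
    (H : ∀ x, ω x v ≠ 0 → ∀ J, ω x J = 0 →
      fderiv ℝ ω x (e₁ x) J = fderiv ℝ ω x J (e₁ x)) :
    ∃ g : OpenPartialHomeomorph (Vec 3) (Vec 3), p ∈ g.target ∧
      (∀ c ∈ g.source, ContDiffAt ℝ (⊤ : ℕ∞) g c) ∧
      (∀ y ∈ g.target, ContDiffAt ℝ (⊤ : ℕ∞) g.symm y) ∧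
      ∀ c ∈ g.source, ω (g c) v ≠ 0 ∧ fderiv ℝ g c (Pi.single 0 1) = e₁ (g c) ∧
        ω (g c) (fderiv ℝ g c (Pi.single 1 1)) = 0 := by
  obtain ⟨Φ₁, δ₁, hδ₁, h₁⟩ := exists_localFlow ⟨e₁, he₁.continuous⟩ he₁ p
  obtain ⟨Φ₂, δ₂, hδ₂, h₂⟩ := exists_localFlow ⟨e₂, he₂.continuous⟩ he₂ p
  simp only [ContinuousMap.coe_mk] at h₁ h₂
  set q : Vec 3 → Vec 3 := fun c => p + c 2 • v with hq
  have hqs : ContDiff ℝ (⊤ : ℕ∞) q :=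
    contDiff_const.add ((contDiff_apply ℝ ℝ (2 : Fin 3)).smul contDiff_const)
  set G₂ : Vec 3 → Vec 3 := fun c => Φ₂ (q c, c 1) with hG₂
  set G : Vec 3 → Vec 3 := fun c => Φ₁ (G₂ c, c 0) with hG
  have hq0 : q 0 = p := by simp [hq]
  have hpδ₁ := Metric.mem_ball_self (x := p) hδ₁
  have hpδ₂ := Metric.mem_ball_self (x := p) hδ₂
  have h0δ₁ := Metric.mem_ball_self (x := (0 : ℝ)) hδ₁
  have h0δ₂ := Metric.mem_ball_self (x := (0 : ℝ)) hδ₂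
  have hG₂0 : G₂ 0 = p := by simp [hG₂, hq0, (h₂ p hpδ₂ 0 h0δ₂).2.1]
  have hG0 : G 0 = p := by simp [hG, hG₂0, (h₁ p hpδ₁ 0 h0δ₁).2.1]
  have hG₂s : ∀ c : Vec 3, q c ∈ Metric.ball p δ₂ → c 1 ∈ Metric.ball (0 : ℝ) δ₂ →
      ContDiffAt ℝ (⊤ : ℕ∞) G₂ c := fun c hc hc1 =>
    ContDiffAt.comp c (g := Φ₂) (h₂ _ hc _ hc1).1
      (hqs.contDiffAt.prodMk (contDiff_apply ℝ ℝ (1 : Fin 3)).contDiffAt)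
  have hGs : ∀ c : Vec 3, q c ∈ Metric.ball p δ₂ → c 1 ∈ Metric.ball (0 : ℝ) δ₂ →
      G₂ c ∈ Metric.ball p δ₁ → c 0 ∈ Metric.ball (0 : ℝ) δ₁ →
      ContDiffAt ℝ (⊤ : ℕ∞) G c := fun c hc hc1 hc2 hc0 =>
    ContDiffAt.comp c (g := Φ₁) (h₁ _ hc2 _ hc0).1
      ((hG₂s c hc hc1).prodMk (contDiff_apply ℝ ℝ (0 : Fin 3)).contDiffAt)
  set κ : Vec 3 → ℝ := fun x =>
    (fderiv ℝ ω x (e₁ x) v - fderiv ℝ ω x v (e₁ x)) / ω x v with hκ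
  have hω' : Continuous (fderiv ℝ ω) := hω.continuous_fderiv (by simp)
  have hκc : ContinuousAt κ p := by
    refine ContinuousAt.div ?_ ?_ hv
    · exact (((hω'.clm_apply he₁.continuous).clm_apply continuous_const).sub
        ((hω'.clm_apply continuous_const).clm_apply he₁.continuous)).continuousAt
    · exact (hω.continuous.clm_apply continuous_const).continuousAt
  have hG₂c0 : ContinuousAt G₂ 0 :=
    (hG₂s 0 (by rw [hq0]; exact hpδ₂) (by simpa using hδ₂)).continuousAt
  have hGc0 : ContinuousAt G 0 :=
    (hGs 0 (by rw [hq0]; exact hpδ₂) (by simpa using hδ₂) (by rw [hG₂0]; exact hpδ₁)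
      (by simpa using hδ₁)).continuousAt
  have ev : ∀ᶠ c : Vec 3 in nhds 0, q c ∈ Metric.ball p δ₂ ∧ c 1 ∈ Metric.ball (0 : ℝ) δ₂ ∧
      G₂ c ∈ Metric.ball p δ₁ ∧ c 0 ∈ Metric.ball (0 : ℝ) δ₁ ∧ ω (G c) v ≠ 0 ∧
      |κ (G c)| < |κ p| + 1 := by
    have t1 : ∀ᶠ c : Vec 3 in nhds 0, q c ∈ Metric.ball p δ₂ :=
      hqs.continuous.continuousAt.eventually_mem (by rw [hq0]; exact Metric.ball_mem_nhds _ hδ₂)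
    have t2 : ∀ᶠ c : Vec 3 in nhds 0, c 1 ∈ Metric.ball (0 : ℝ) δ₂ :=
      (continuous_apply 1).continuousAt.eventually_mem (Metric.ball_mem_nhds _ hδ₂)
    have t3 : ∀ᶠ c : Vec 3 in nhds 0, G₂ c ∈ Metric.ball p δ₁ :=
      hG₂c0.eventually_mem (by rw [hG₂0]; exact Metric.ball_mem_nhds _ hδ₁)
    have t4 : ∀ᶠ c : Vec 3 in nhds 0, c 0 ∈ Metric.ball (0 : ℝ) δ₁ :=
      (continuous_apply 0).continuousAt.eventually_mem (Metric.ball_mem_nhds _ hδ₁)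
    have t5 : ∀ᶠ c : Vec 3 in nhds 0, ω (G c) v ≠ 0 := by
      have : ContinuousAt (fun c => ω (G c) v) 0 :=
        ContinuousAt.comp (g := fun x => ω x v)
          (hω.continuous.clm_apply continuous_const).continuousAt hGc0
      exact this.eventually_ne (by rw [hG0]; exact hv)
    have t6 : ∀ᶠ c : Vec 3 in nhds 0, |κ (G c)| < |κ p| + 1 := by
      have : ContinuousAt (fun c => |κ (G c)|) 0 := by
        refine ContinuousAt.abs (ContinuousAt.comp (g := κ) ?_ hGc0)
        rw [hG0]; exact hκc
      exact this.eventually_lt continuousAt_const (by rw [hG0]; linarith)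
    filter_upwards [t1, t2, t3, t4, t5, t6] with c a1 a2 a3 a4 a5 a6
      using ⟨a1, a2, a3, a4, a5, a6⟩
  obtain ⟨ε, hε, hB⟩ := Metric.eventually_nhds_iff_ball.mp ev
  have hGB : ∀ c ∈ Metric.ball (0 : Vec 3) ε, ContDiffAt ℝ (⊤ : ℕ∞) G c := fun c hc =>
    hGs c (hB c hc).1 (hB c hc).2.1 (hB c hc).2.2.1 (hB c hc).2.2.2.1
  have hGd : ∀ c ∈ Metric.ball (0 : Vec 3) ε, DifferentiableAt ℝ G c := fun c hc =>
    (hGB c hc).differentiableAt (by simp)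
  have hupd : ∀ c ∈ Metric.ball (0 : Vec 3) ε, ∀ i, ∀ s ∈ Set.Ioo (-ε) ε,
      Function.update c i s ∈ Metric.ball (0 : Vec 3) ε := by
    intro c hc i s hs
    rw [mem_ball_zero_iff, pi_norm_lt_iff hε] at hc ⊢
    intro j
    by_cases hj : j = i
    · subst hj; simpa [abs_lt] using hs
    · simpa [hj] using hc j
  have hci : ∀ c ∈ Metric.ball (0 : Vec 3) ε, ∀ i, c i ∈ Set.Ioo (-ε) ε := by
    intro c hc i
    rw [mem_ball_zero_iff, pi_norm_lt_iff hε] at hc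
    simpa [abs_lt] using hc i
  have hD0 : ∀ c ∈ Metric.ball (0 : Vec 3) ε, fderiv ℝ G c (Pi.single 0 1) = e₁ (G c) := by
    intro c hc
    obtain ⟨-, -, b3, b4, -⟩ := hB c hc
    refine fderiv_basisVector (hGd c hc) 0 ?_
    have := (h₁ _ b3 _ b4).2.2
    simpa [hG, hG₂, hq] using this
  have hD1 : ∀ c ∈ Metric.ball (0 : Vec 3) ε, c 0 = 0 →
      fderiv ℝ G c (Pi.single 1 1) = e₂ (G c) := by
    intro c hc hc0
    obtain ⟨b1, b2, b3, b4, -⟩ := hB c hc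
    have e : ∀ c' ∈ Metric.ball (0 : Vec 3) ε, c' 0 = 0 → G c' = G₂ c' := by
      intro c' hc' h0
      simp only [hG, h0]
      exact (h₁ _ (hB c' hc').2.2.1 0 h0δ₁).2.1
    refine fderiv_basisVector (hGd c hc) 1 ?_
    have h := (h₂ _ b1 _ b2).2.2
    rw [e c hc hc0]
    refine h.congr_of_eventuallyEq ?_
    filter_upwards [Ioo_mem_nhds (hci c hc 1).1 (hci c hc 1).2] with s hs
    rw [e _ (hupd c hc 1 s hs) (by simpa using hc0)]
    simp [hG₂, hq]
  have h0B := Metric.mem_ball_self (x := (0 : Vec 3)) hε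
  have hD2 : fderiv ℝ G 0 (Pi.single 2 1) = v := by
    refine fderiv_basisVector (hGd 0 h0B) 2 ?_
    have h : HasDerivAt (fun s : ℝ => p + s • v) v ((0 : Vec 3) 2) := by
      simpa using ((hasDerivAt_id (0 : ℝ)).smul_const v).const_add p
    refine h.congr_of_eventuallyEq ?_
    filter_upwards [Ioo_mem_nhds (hci 0 h0B 2).1 (hci 0 h0B 2).2] with s hs
    obtain ⟨b1, -, b3, -⟩ := hB _ (hupd 0 h0B 2 s hs)
    have a1 := (h₁ _ b3 0 h0δ₁).2.1
    have a2 := (h₂ _ b1 0 h0δ₂).2.1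
    have : G (Function.update 0 2 s) = q (Function.update 0 2 s) := by
      rw [← a2]
      refine Eq.trans ?_ a1
      simp [hG]
    rw [this]
    simp [hq]
  -- `ω(∂₁G)` vanishes on `c₀ = 0` and satisfies a linear equation along the lines `∂₀`.
  have hω1 : ∀ c ∈ Metric.ball (0 : Vec 3) ε, ω (G c) (fderiv ℝ G c (Pi.single 1 1)) = 0 := by
    intro c hc
    have hγ : ∀ t ∈ Set.Ioo (-ε) ε, Function.update c 0 t ∈ Metric.ball (0 : Vec 3) ε :=
      hupd c hc 0
    have h := eq_zero_of_linear_ode (ε := ε) (K := |κ p| + 1)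
      (k := fun t => κ (G (Function.update c 0 t)))
      (g := fun t => ω (G (Function.update c 0 t))
        (fderiv ℝ G (Function.update c 0 t) (Pi.single 1 1)))
      (fun t ht => (hB _ (hγ t ht)).2.2.2.2.2.le) ?_ ?_ (hci c hc 0)
    · simpa using h
    · intro t ht
      have hvt := (hB _ (hγ t ht)).2.2.2.2.1
      obtain ⟨D, hD, hD'⟩ := hasFDerivAt_form_apply (hGB _ (hγ t ht))
        (hω.differentiable (by simp)) (he₁.differentiable (by simp)) hω₁
        (by filter_upwards [Metric.isOpen_ball.mem_nhds (hγ t ht)] with c' hc' using hD0 c' hc')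
        hvt (H _ hvt)
      have h := hD.comp_hasDerivAt t (hasDerivAt_update c 0 t)
      rw [hD'] at h
      exact h
    · have h0 := hγ 0 ⟨by linarith, hε⟩
      rw [hD1 _ h0 (by simp)]
      exact hω₂ _
  have hinj : Function.Injective (fderiv ℝ G 0) := by
    rw [injective_iff_map_eq_zero]
    intro c hc
    have hsum : c = c 0 • Pi.single 0 1 + c 1 • Pi.single 1 1 + c 2 • Pi.single 2 1 := by
      ext i; fin_cases i <;> simp
    rw [hsum, map_add, map_add, map_smul, map_smul, map_smul, hD0 0 h0B, hD1 0 h0B rfl, hD2,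
      hG0] at hc
    rw [Fintype.linearIndependent_iff] at hli
    have := hli c (by simpa [Fin.sum_univ_three] using hc)
    exact funext this
  let e : Vec 3 ≃L[ℝ] Vec 3 :=
    (LinearEquiv.ofInjectiveEndo (fderiv ℝ G 0 : Vec 3 →ₗ[ℝ] Vec 3) hinj).toContinuousLinearEquiv
  have hee : (e : Vec 3 →L[ℝ] Vec 3) = fderiv ℝ G 0 := by ext1 c; rfl
  obtain ⟨g, hgG, h0g, hgS, hgt⟩ := exists_smooth_localInverse
    (Metric.ball_mem_nhds (0 : Vec 3) hε) hGB e (by rw [hee]; exact (hGd 0 h0B).hasFDerivAt)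
  have hgG' : (g : Vec 3 → Vec 3) = G := funext hgG
  refine ⟨g, ?_, ?_, hgt, ?_⟩
  · have := g.map_source h0g
    rwa [hgG, hG0] at this
  · intro c hc
    rw [hgG']; exact hGB c (hgS hc)
  · intro c hc
    rw [hgG']
    exact ⟨(hB c (hgS hc)).2.2.2.2.1, hD0 c (hgS hc), hω1 c (hgS hc)⟩

/-! ### Triangular coordinates -/

/-- Involutivity of the plane field `ker N²`, seen through the form `ω = xᵢ ∘ N²`: the polarised
torsion identity gives `dω(N²v, J) = 0` for `J` in the kernel of `ω`. -/
lemma form_involutive {N : Vec 3 → (Vec 3 →L[ℝ] Vec 3)} {x v : Vec 3} (hd : DifferentiableAt ℝ N x)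
    (h3 : ∀ x v, N x (N x (N x v)) = 0) {α : Vec 3 →L[ℝ] ℝ} (hv : α (N x (N x v)) ≠ 0)
    (hK : N x (N x (fderiv ℝ N x (N x (N x v)) v - fderiv ℝ N x (N x v) (N x v))) = 0)
    {J : Vec 3} (hJ : α (N x (N x J)) = 0) :
    fderiv ℝ (fun y => α.comp ((N y).comp (N y))) x (N x (N x v)) J
      = fderiv ℝ (fun y => α.comp ((N y).comp (N y))) x J (N x (N x v)) := by
  have hv0 : N x (N x v) ≠ 0 := fun h => hv (by rw [h, map_zero])
  have hcomb := exists_cyclic_combination (h3 x) hv0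
  have hC := fderiv_cube_eq_zero hd h3
  obtain ⟨a, b, c, rfl⟩ := hcomb J
  obtain rfl : a = 0 := by simpa [h3, hv] using hJ
  obtain ⟨u, hu⟩ : ∃ u, (0 : ℝ) • v + b • N x v + c • N x (N x v) = N x u :=
    ⟨b • v + c • N x v, by simp⟩
  rw [hu]
  have hω : HasFDerivAt (fun y => α.comp ((N y).comp (N y))) _ x :=
    (hasFDerivAt_const α x).clm_comp (hd.hasFDerivAt.clm_comp hd.hasFDerivAt)
  have e1 := hC (N x (N x v)) u
  have e2 := congrArg (N x) (hC (N x u) v)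
  have e3 := torsion_polarised (h3 x) hC v hcomb hK u
  rw [hω.fderiv]
  simp only [map_add, h3, map_zero, add_zero] at e2
  simp [h3]
  have := congrArg α (show fderiv ℝ N x (N x (N x v)) (N x (N x u))
      + N x (fderiv ℝ N x (N x (N x v)) (N x u)) - N x (fderiv ℝ N x (N x u) (N x (N x v))) = 0 by
    linear_combination (norm := module) e1 - e2 - e3)
  simp only [map_add, map_sub, map_zero] at this
  linarith

lemma reducible_of_haantjes {L : OpField 3} (hL : SmoothOp L)
    (hJordan : ∀ x : Vec 3, ∃ lam : ℝ,
      (L x - lam • (1 : Matrix (Fin 3) (Fin 3) ℝ)) ^ 3 = 0 ∧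
      (L x - lam • (1 : Matrix (Fin 3) (Fin 3) ℝ)).rank = 2)
    (hH : ∀ ξ η : VF 3, SmoothVF ξ → SmoothVF η → ∀ x : Vec 3, haantjes L ξ η x = 0)
    (p : Vec 3) : LocallyReducible L p UpperTri := by
  have h3 := opCLM_nilPart_cube hJordan
  have hK := torsion_of_haantjes hL h3 hH
  have hN := contDiff_opCLM (smoothOp_nilPart hL)
  have hLN : ∀ x w, L x *ᵥ w = ((L x).trace / 3) • w + opCLM (nilPart L) x w := by
    intro x w
    simp only [opCLM_apply, nilPart, Matrix.sub_mulVec, Matrix.smul_mulVec, Matrix.one_mulVec]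
    module
  set N := opCLM (nilPart L)
  obtain ⟨v, hv⟩ : ∃ v, N p (N p v) ≠ 0 := exists_nilPart_sq_ne_zero hJordan p
  obtain ⟨i, hi⟩ : ∃ i, N p (N p v) i ≠ 0 := by
    by_contra! h
    exact hv (funext h)
  set α : Vec 3 →L[ℝ] ℝ := ContinuousLinearMap.proj i with hα
  set ω : Vec 3 → (Vec 3 →L[ℝ] ℝ) := fun y => α.comp ((N y).comp (N y)) with hω
  have hωs : ContDiff ℝ (⊤ : ℕ∞) ω := contDiff_const.clm_comp (hN.clm_comp hN)
  have hωN : ∀ x w, ω x (N x w) = 0 := fun x w => by simp [hω, h3]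
  have hli : LinearIndependent ℝ ![N p (N p v), N p v, v] := by
    have := (linearIndependent_cyclic (h3 p) hv).comp ![2, 1, 0] (by decide)
    convert this using 1
    ext k; fin_cases k <;> rfl
  obtain ⟨g, hpt, hgs, hgt, hg⟩ := exists_frobenius_chart (ω := ω) (v := v) (p := p) hωs
    (hN.clm_apply (hN.clm_apply contDiff_const)) (hN.clm_apply contDiff_const)
    (fun x => hωN x _) (fun x => hωN x _) hi hli
    (fun x hx J hJ => form_involutive (hN.differentiable (by simp) x) h3 hx (hK x v) hJ)
  have himg : g.symm '' g.target = g.source := g.symm_image_target_eq_source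
  refine ⟨g.target, g.open_target, hpt, g.symm, g,
    fun y hy => (hgt y hy).contDiffWithinAt, himg ▸ g.open_source,
    fun c hc => (hgs c (himg ▸ hc)).contDiffWithinAt, fun x hx => g.right_inv hx,
    fun c hc => g.left_inv (himg ▸ hc), fun c hc => ?_⟩
  rw [himg] at hc
  have hgc := g.map_source hc
  obtain ⟨hω0, hc0, hc1⟩ := hg c hc
  have dg := ((hgs c hc).differentiableAt (by simp)).hasFDerivAt
  have dg' := ((hgt _ hgc).differentiableAt (by simp)).hasFDerivAt
  set A := fderiv ℝ g c with hA
  set B := fderiv ℝ g.symm (g c) with hB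
  have hBA : ∀ w, B (A w) = w := by
    have d2 : HasFDerivAt (g.symm ∘ g) (ContinuousLinearMap.id ℝ (Vec 3)) c :=
      (hasFDerivAt_id c).congr_of_eventuallyEq (by
        filter_upwards [g.open_source.mem_nhds hc] with y hy using g.left_inv hy)
    exact DFunLike.congr_fun ((dg'.comp c dg).unique d2)
  have hAB : ∀ w, A (B w) = w := by
    have hs : Function.Surjective A :=
      LinearMap.surjective_of_injective (f := (A : Vec 3 →ₗ[ℝ] Vec 3))
        (Function.LeftInverse.injective hBA)
    intro w
    obtain ⟨u, rfl⟩ := hs w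
    rw [hBA]
  have hAω : ∀ d, ω (g c) (A d) = d 2 * ω (g c) (A (Pi.single 2 1)) := by
    intro d
    have hsum : d = d 0 • Pi.single 0 1 + d 1 • Pi.single 1 1 + d 2 • Pi.single 2 1 := by
      ext i; fin_cases i <;> simp
    conv_lhs => rw [hsum]
    simp only [map_add, map_smul, hc1, hc0, hωN, smul_eq_mul, mul_zero, zero_add]
  have hA2 : ω (g c) (A (Pi.single 2 1)) ≠ 0 := by
    intro h
    apply hω0
    rw [← hAB v, hAω, h, mul_zero]
  set M := jacobianMatrix g.symm (g c) * L (g c) * jacobianMatrix g c with hM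
  have hMw : ∀ j, M.col j = B (L (g c) *ᵥ A (Pi.single j 1)) := by
    intro j
    rw [← Matrix.mulVec_single_one, hM, ← Matrix.mulVec_mulVec, ← Matrix.mulVec_mulVec,
      jacobianMatrix_mulVec, jacobianMatrix_mulVec]
  have hcol0 : M.col 0 = ((L (g c)).trace / 3) • Pi.single 0 1 := by
    rw [hMw, hLN]
    conv_lhs => rw [hc0, h3, add_zero, ← hc0, map_smul, hBA]
  have h21 : M 2 1 = 0 := by
    have h := hAω (M.col 1)
    rw [hMw, hAB, hLN, map_add, map_smul, hc1, hωN, smul_zero, add_zero] at h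
    have h' := (mul_eq_zero.mp h.symm).resolve_right hA2
    rw [← hLN, ← hMw] at h'
    exact h'
  intro a b hab
  have hcol : ∀ a, M a 0 = (((L (g c)).trace / 3) • (Pi.single 0 1 : Vec 3)) a :=
    fun a => congrFun hcol0 a
  fin_cases a <;> fin_cases b <;> first | (exact absurd hab (by decide)) | exact h21 | simp [hcol]

/-- in dimension 3, for an operator field with a single eigenvalue of
geometric multiplicity one at every point, local upper-triangularizability is
equivalent to the vanishing of the Haantjes torsion. -/
theorem stmt_0 (L : OpField 3) (hL : SmoothOp L)
    (hJordan : ∀ x : Vec 3, ∃ lam : ℝ,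
      (L x - lam • (1 : Matrix (Fin 3) (Fin 3) ℝ)) ^ 3 = 0 ∧
      (L x - lam • (1 : Matrix (Fin 3) (Fin 3) ℝ)).rank = 2) :
    (∀ p : Vec 3, LocallyReducible L p UpperTri) ↔
      (∀ ξ η : VF 3, SmoothVF ξ → SmoothVF η → ∀ x : Vec 3, haantjes L ξ η x = 0) :=
  ⟨fun h _ _ hξ hη x => haantjes_of_reducible hL hJordan (h x) hξ hη,
    fun h p => reducible_of_haantjes hL hJordan h p⟩
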